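/- arXiv:1805.02700 — 2 statements merged into one kernel-verified Lean document; each statement's English description precedes it below -/
import Mathlib

section
/- Let X and Y be metric spaces, let D ⊆ X be a domain (a nonempty open connected set), and let f : D → Y be a continuous map which is open (the image of every open subset of D is open in Y), discrete (for every y ∈ Y the preimage f⁻¹(y) consists of isolated points of D), and closed (the image of every set closed in D is closed in f(D)). Then the cluster set C(f, ∂D) := { y ∈ Y : there exist points p_k ∈ D and p ∈ ∂D with p_k → p and f(p_k) → y } is disjoint from f(D); consequently, since f(D) is open, C(f, ∂D) ⊆ ∂ f(D). In other words, an open, discrete and closed map preserves the boundary. -/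
open Filter Topology Set

/-!
Suppose `p k → q ∈ ∂D` and `f (p k) → y` with `y ∈ f(D)`. If the fibre over `y` has empty interior,
continuity lets us move each `p k` slightly off the fibre without changing either limit. The
perturbed points form a relatively closed subset of `D`, because they converge to `q ∉ D`; so their
image is relatively closed in `f(D)` and contains its limit `y`, although it avoids `y`.
For a connected `D` with nonempty boundary, discrete fibres have empty interior because `D` has no
isolated points.
-/

section DiscreteFibers

variable {X Y : Type*} [TopologicalSpace X] {D : Set X}

theorem interior_eq_empty_of_discrete_subset_preperfect {S : Set X} (hD : Preperfect D)
    (hSD : S ⊆ D) (hS : ∀ x ∈ S, ∃ U ∈ 𝓝 x, ∀ z ∈ U ∩ S, z = x) : interior S = ∅ := by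
  refine eq_empty_of_forall_notMem fun x hx => ?_
  have hxS : x ∈ S := interior_subset hx
  obtain ⟨U, hU, hUS⟩ := hS x hxS
  obtain ⟨z, ⟨hzx, _⟩, hzU, hzS⟩ :=
    ((accPt_iff_frequently.1 (hD x (hSD hxS))).and_eventually
      (inter_mem hU (mem_interior_iff_mem_nhds.1 hx))).exists
  exact hzx (hUS z ⟨hzU, hzS⟩)

theorem preperfect_of_isPreconnected_of_not_isClosed [T1Space X] (hD : IsPreconnected D)
    (hnc : ¬ IsClosed D) : Preperfect D :=
  hD.preperfect_of_nontrivial (not_subsingleton_iff.1 fun h => hnc h.isClosed)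

theorem interior_fiber_eq_empty_of_isPreconnected [T1Space X] {f : X → Y} {y : Y}
    (hDopen : IsOpen D) (hDconn : IsPreconnected D) (hfrontier : (frontier D).Nonempty)
    (hdiscrete : ∀ x ∈ D, f x = y → ∃ U ∈ 𝓝 x, ∀ z ∈ U ∩ D, f z = y → z = x) :
    interior (D ∩ f ⁻¹' {y}) = ∅ := by
  have hnc : ¬ IsClosed D := fun h => hfrontier.ne_empty (IsClopen.frontier_eq ⟨h, hDopen⟩)
  refine interior_eq_empty_of_discrete_subset_preperfect
    (preperfect_of_isPreconnected_of_not_isClosed hDconn hnc) inter_subset_left ?_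
  rintro x ⟨hxD, hxy⟩
  obtain ⟨U, hU, hUx⟩ := hdiscrete x hxD hxy
  exact ⟨U, hU, fun z ⟨hzU, hzD, hzy⟩ => hUx z ⟨hzU, hzD⟩ hzy⟩

end DiscreteFibers

section BoundaryClusterSet

variable {X Y : Type*} [TopologicalSpace X] [TopologicalSpace Y]
  {f : X → Y} {D : Set X} {q : X} {y : Y}

/-- The cluster set `C(f, ∂D)`: all limits of `f` along sequences in `D` that converge to a point of
the boundary of `D`. Defined by sequences rather than by filters. -/
def boundaryClusterSet (f : X → Y) (D : Set X) : Set Y :=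
  {y | ∃ p : ℕ → X, (∀ k, p k ∈ D) ∧ ∃ q ∈ frontier D,
    Tendsto p atTop (𝓝 q) ∧ Tendsto (fun k => f (p k)) atTop (𝓝 y)}

/-- `f` is closed as a map from `D` onto `f '' D`, both with the subspace topology; relatively
closed sets are encoded as traces of closed sets of the ambient spaces. -/
def IsClosedMapOntoImage (f : X → Y) (D : Set X) : Prop :=
  ∀ C : Set X, IsClosed C → ∃ F : Set Y, IsClosed F ∧ f '' (C ∩ D) = F ∩ f '' D

theorem boundaryClusterSet_subset_closure_image (f : X → Y) (D : Set X) :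
    boundaryClusterSet f D ⊆ closure (f '' D) := by
  rintro y ⟨p, hpD, _, _, _, hfp⟩
  exact mem_closure_of_tendsto hfp (.of_forall fun k => mem_image_of_mem f (hpD k))

theorem exists_seq_off_fiber_of_tendsto [FirstCountableTopology X] [FirstCountableTopology Y]
    (hD : IsOpen D) (hf : ContinuousOn f D) (hfiber : interior (D ∩ f ⁻¹' {y}) = ∅)
    {p : ℕ → X} (hpD : ∀ k, p k ∈ D) (hp : Tendsto p atTop (𝓝 q))
    (hfp : Tendsto (fun k => f (p k)) atTop (𝓝 y)) :
    ∃ z : ℕ → X, (∀ k, z k ∈ D ∧ f (z k) ≠ y) ∧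
      Tendsto z atTop (𝓝 q) ∧ Tendsto (fun k => f (z k)) atTop (𝓝 y) := by
  have hfreq : ∃ᶠ x in 𝓝 q ⊓ comap f (𝓝 y), x ∈ D ∧ f x ≠ y := by
    rw [((nhds_basis_opens q).inf ((nhds_basis_opens y).comap f)).frequently_iff]
    rintro ⟨U, V⟩ ⟨⟨hqU, hU⟩, hyV, hV⟩
    obtain ⟨k, hkU, hkV⟩ :=
      ((hp.eventually_mem (hU.mem_nhds hqU)).and (hfp.eventually_mem (hV.mem_nhds hyV))).exists
    have hW : IsOpen (D ∩ f ⁻¹' V ∩ U) := (hf.isOpen_inter_preimage hD hV).inter hU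
    have hWfiber : ¬ D ∩ f ⁻¹' V ∩ U ⊆ D ∩ f ⁻¹' {y} := fun h =>
      (hfiber ▸ interior_maximal h hW ⟨⟨hpD k, hkV⟩, hkU⟩ : p k ∈ (∅ : Set X))
    obtain ⟨z, ⟨⟨hzD, hzV⟩, hzU⟩, hz⟩ := not_subset.1 hWfiber
    exact ⟨z, ⟨hzU, hzV⟩, hzD, fun hzy => hz ⟨hzD, hzy⟩⟩
  obtain ⟨z, hz, hzDy⟩ := exists_seq_forall_of_frequently hfreq
  rw [tendsto_inf, tendsto_comap_iff] at hz
  exact ⟨z, hzDy, hz⟩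

theorem IsClosedMapOntoImage.exists_apply_eq_of_tendsto [T2Space X] (hf : IsClosedMapOntoImage f D)
    (hq : q ∉ D) (hy : y ∈ f '' D) {z : ℕ → X} (hzD : ∀ k, z k ∈ D)
    (hz : Tendsto z atTop (𝓝 q)) (hfz : Tendsto (fun k => f (z k)) atTop (𝓝 y)) :
    ∃ k, f (z k) = y := by
  have htrace : insert q (range z) ∩ D = range z := by
    rw [insert_inter_of_notMem hq, inter_eq_left.2 (range_subset_iff.2 hzD)]
  obtain ⟨F, hF, himage⟩ := hf _ hz.isCompact_insert_range.isClosed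
  rw [htrace] at himage
  have hfzF : ∀ k, f (z k) ∈ F := fun k =>
    (himage.subset (mem_image_of_mem f (mem_range_self k))).1
  have hyF : y ∈ F := hF.mem_of_tendsto hfz (.of_forall hfzF)
  obtain ⟨_, ⟨k, rfl⟩, hk⟩ := himage.superset ⟨hyF, hy⟩
  exact ⟨k, hk⟩

theorem disjoint_boundaryClusterSet_image [T2Space X] [FirstCountableTopology X]
    [FirstCountableTopology Y] (hD : IsOpen D) (hcont : ContinuousOn f D)
    (hfiber : (frontier D).Nonempty → ∀ y, interior (D ∩ f ⁻¹' {y}) = ∅)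
    (hclosed : IsClosedMapOntoImage f D) :
    Disjoint (boundaryClusterSet f D) (f '' D) := by
  refine disjoint_left.2 ?_
  rintro y ⟨p, hpD, q, hq, hp, hfp⟩ hy
  have hqD : q ∉ D := disjoint_left.1 (disjoint_frontier_iff_isOpen.2 hD) hq
  obtain ⟨z, hz, hzq, hfz⟩ := exists_seq_off_fiber_of_tendsto hD hcont (hfiber ⟨q, hq⟩ y) hpD hp hfp
  obtain ⟨k, hk⟩ := hclosed.exists_apply_eq_of_tendsto hqD hy (fun k => (hz k).1) hzq hfz
  exact (hz k).2 hk

theorem cluster_set_of_open_discrete_closed_map_general [T2Space X] [FirstCountableTopology X]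
    [FirstCountableTopology Y] (hD : IsOpen D) (hcont : ContinuousOn f D)
    (hfiber : (frontier D).Nonempty → ∀ y, interior (D ∩ f ⁻¹' {y}) = ∅)
    (hclosed : IsClosedMapOntoImage f D) :
    Disjoint (boundaryClusterSet f D) (f '' D) ∧
      boundaryClusterSet f D ⊆ frontier (f '' D) := by
  have hdisj := disjoint_boundaryClusterSet_image hD hcont hfiber hclosed
  exact ⟨hdisj, fun y hy => ⟨boundaryClusterSet_subset_closure_image f D hy,
    fun hint => disjoint_left.1 hdisj hy (interior_subset hint)⟩⟩

end BoundaryClusterSet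

/-- An open, discrete and closed continuous map `f` of a domain `D` in a metric
space into a metric space preserves the boundary: the cluster set of `f` at
`∂D` is disjoint from `f(D)` and is contained in `∂ f(D)`. -/
theorem cluster_set_of_open_discrete_closed_map {X Y : Type*}
    [MetricSpace X] [MetricSpace Y] (D : Set X)
    (hDopen : IsOpen D) (hDconn : IsConnected D) (f : X → Y)
    (hcont : ContinuousOn f D)
    (hopen : ∀ U : Set X, U ⊆ D → IsOpen U → IsOpen (f '' U))
    (hdiscrete : ∀ y : Y, ∀ x ∈ D, f x = y →
      ∃ U ∈ 𝓝 x, ∀ z ∈ U ∩ D, f z = y → z = x)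
    (hclosed : ∀ C : Set X, C ⊆ D → (∃ C' : Set X, IsClosed C' ∧ C = C' ∩ D) →
      ∃ F : Set Y, IsClosed F ∧ f '' C = F ∩ f '' D) :
    Disjoint
      {y : Y | ∃ p : ℕ → X, (∀ k, p k ∈ D) ∧ ∃ q ∈ frontier D,
        Tendsto p atTop (𝓝 q) ∧ Tendsto (fun k => f (p k)) atTop (𝓝 y)}
      (f '' D) ∧
    {y : Y | ∃ p : ℕ → X, (∀ k, p k ∈ D) ∧ ∃ q ∈ frontier D,
        Tendsto p atTop (𝓝 q) ∧ Tendsto (fun k => f (p k)) atTop (𝓝 y)} ⊆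
      frontier (f '' D) := by
  exact cluster_set_of_open_discrete_closed_map_general hDopen hcont
    (fun hfrontier y =>
      interior_fiber_eq_empty_of_isPreconnected hDopen hDconn.2 hfrontier (hdiscrete y))
    (fun C hC => hclosed (C ∩ D) inter_subset_right ⟨C, hC, rfl⟩)
end

section
/- Let (X, d) be a metric space, let δ > 0, let x₀ ∈ X, and let F ⊆ X be a continuum (a nonempty compact connected set) with diameter d(F) := sup_{x,y ∈ F} d(x, y) ≥ δ. Then there exists a continuum C ⊆ F \ B(x₀, δ/4) with d(C) ≥ δ/4, where B(x₀, δ/4) = { x ∈ X : d(x, x₀) < δ/4 } is the open ball of radius δ/4 about x₀. -/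
open Metric Set

/-!
Let `a ∈ F` be at distance at least `d(F) / 2` from `x₀`, and suppose that `F` meets `B(x₀, r)`.
By boundary bumping, the connected component `C` of `a` in `F \ B(x₀, r)` reaches the closure of the
ball, so that `d(C) ≥ d(F) / 2 - r`. Boundary bumping holds because components of a compact
Hausdorff space are intersections of clopen sets: a component of `F \ U` missing `closure U` would
lie in a relatively clopen subset of `F \ U` missing `closure U`, and this set would be
clopen in `F`.
-/

section Topology

variable {X : Type*} [TopologicalSpace X]

theorem isCompact_connectedComponentIn {K : Set X} (hK : IsCompact K) (x : X) :
    IsCompact (connectedComponentIn K x) := by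
  by_cases hx : x ∈ K
  · have : CompactSpace K := isCompact_iff_compactSpace.mp hK
    rw [connectedComponentIn_eq_image hx]
    exact isClosed_connectedComponent.isCompact.image continuous_subtype_val
  · rw [connectedComponentIn_eq_empty hx]
    exact isCompact_empty

variable [T2Space X]

theorem exists_isClopen_subset_of_connectedComponent_subset [CompactSpace X] {x : X} {U : Set X}
    (hU : IsOpen U) (hxU : connectedComponent x ⊆ U) : ∃ V, IsClopen V ∧ x ∈ V ∧ V ⊆ U := by
  let clopenNhd := {V : Set X // IsClopen V ∧ x ∈ V}
  have : Nonempty clopenNhd := ⟨⟨univ, isClopen_univ, mem_univ x⟩⟩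
  have directed : Directed (· ⊇ ·) (fun V : clopenNhd => V.1) := fun V W =>
    ⟨⟨V.1 ∩ W.1, V.2.1.inter W.2.1, V.2.2, W.2.2⟩, inter_subset_left, inter_subset_right⟩
  rw [connectedComponent_eq_iInter_isClopen] at hxU
  obtain ⟨V, hVU⟩ := exists_subset_nhds_of_compactSpace directed (fun V => V.2.1.isClosed)
    fun y hy => hU.mem_nhds (hxU hy)
  exact ⟨V.1, V.2.1, V.2.2, hVU⟩

theorem exists_isCompact_separation_of_disjoint_connectedComponentIn {K T : Set X} {a : X}
    (hK : IsCompact K) (ha : a ∈ K) (hT : IsClosed T)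
    (haT : Disjoint (connectedComponentIn K a) T) :
    ∃ A B, IsCompact A ∧ IsCompact B ∧ A ∪ B = K ∧ Disjoint A B ∧ a ∈ A ∧ Disjoint A T := by
  have : CompactSpace K := isCompact_iff_compactSpace.mp hK
  rw [connectedComponentIn_eq_image ha, disjoint_image_left, ← subset_compl_iff_disjoint_right]
    at haT
  obtain ⟨V, hV, haV, hVT⟩ := exists_isClopen_subset_of_connectedComponent_subset
    (hT.preimage continuous_subtype_val).isOpen_compl haT
  refine ⟨(↑) '' V, (↑) '' Vᶜ, hV.isClosed.isCompact.image continuous_subtype_val,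
    hV.compl.isClosed.isCompact.image continuous_subtype_val, ?_, ?_, ⟨⟨a, ha⟩, haV, rfl⟩, ?_⟩
  · rw [← image_union, union_compl_self, image_univ, Subtype.range_coe]
  · exact (disjoint_image_iff Subtype.val_injective).mpr disjoint_compl_right
  · exact disjoint_image_left.mpr (subset_compl_iff_disjoint_right.mp hVT)

theorem connectedComponentIn_sdiff_inter_closure_nonempty {F U : Set X} {a : X}
    (hFcpt : IsCompact F) (hFconn : IsPreconnected F) (hU : IsOpen U) (ha : a ∈ F \ U)
    (hFU : (F ∩ U).Nonempty) : (connectedComponentIn (F \ U) a ∩ closure U).Nonempty := by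
  by_contra hempty
  obtain ⟨A, B, hA, hB, hAB, disjAB, haA, disjAU⟩ :=
    exists_isCompact_separation_of_disjoint_connectedComponentIn (hFcpt.diff hU) ha
      isClosed_closure (disjoint_iff_inter_eq_empty.mpr (not_nonempty_iff_eq_empty.mp hempty))
  have cover : F ⊆ A ∪ (B ∪ closure U) := by
    rw [← union_assoc, hAB]
    exact (subset_sdiff_union F U).trans (union_subset_union_right _ subset_closure)
  obtain ⟨z, -, hzA, hzBU⟩ := isPreconnected_closed_iff.mp hFconn A (B ∪ closure U)
    hA.isClosed (hB.isClosed.union isClosed_closure) cover ⟨a, ha.1, haA⟩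
    (hFU.mono (inter_subset_inter_right F (subset_closure.trans subset_union_right)))
  exact disjoint_left.mp (disjAB.union_right disjAU) hzA hzBU

end Topology

theorem exists_mem_half_diam_le_dist {X : Type*} [PseudoMetricSpace X] {s : Set X}
    (hs : IsCompact s) (hne : s.Nonempty) (x : X) : ∃ a ∈ s, diam s / 2 ≤ dist a x := by
  obtain ⟨a, has, hmax⟩ := hs.exists_isMaxOn hne (continuous_id.dist continuous_const).continuousOn
  have hdiam : diam s ≤ 2 * dist a x := diam_le_of_subset_closedBall dist_nonneg hmax
  exact ⟨a, has, by linarith⟩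

theorem exists_subcontinuum_outside_ball_general {X : Type*} [MetricSpace X] {F : Set X} {r : ℝ}
    (hFcpt : IsCompact F) (hFconn : IsConnected F) (x₀ : X) (hr : 0 ≤ r) (hrF : r ≤ diam F / 2) :
    ∃ C ⊆ F \ ball x₀ r, IsCompact C ∧ IsConnected C ∧ diam F / 2 - r ≤ diam C := by
  rcases (F ∩ ball x₀ r).eq_empty_or_nonempty with hdisj | hmeet
  · exact ⟨F, subset_sdiff.mpr ⟨Subset.rfl, disjoint_iff_inter_eq_empty.mpr hdisj⟩, hFcpt, hFconn,
      by linarith⟩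
  obtain ⟨a, haF, hax₀⟩ := exists_mem_half_diam_le_dist hFcpt hFconn.nonempty x₀
  have ha : a ∈ F \ ball x₀ r := ⟨haF, by simpa using hrF.trans hax₀⟩
  let C := connectedComponentIn (F \ ball x₀ r) a
  have hCcpt : IsCompact C := isCompact_connectedComponentIn (hFcpt.diff isOpen_ball) a
  obtain ⟨y, hyC, hyball⟩ := connectedComponentIn_sdiff_inter_closure_nonempty hFcpt
    hFconn.isPreconnected isOpen_ball ha hmeet
  have hyx₀ : dist y x₀ ≤ r := closure_ball_subset_closedBall hyball
  refine ⟨C, connectedComponentIn_subset _ _, hCcpt,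
    isConnected_connectedComponentIn_iff.mpr ha, ?_⟩
  calc
    diam F / 2 - r ≤ dist a x₀ - dist y x₀ := sub_le_sub hax₀ hyx₀
    _ ≤ dist a y := sub_le_iff_le_add.mpr (dist_triangle a y x₀)
    _ ≤ diam C := dist_le_diam_of_mem hCcpt.isBounded (mem_connectedComponentIn ha) hyC

/-- If `F` is a continuum (nonempty compact connected set) in a metric space
with diameter at least `δ > 0`, then for any point `x₀` there is a continuum
`C ⊆ F \ B(x₀, δ/4)` of diameter at least `δ/4`. -/
theorem exists_subcontinuum_outside_ball {X : Type*} [MetricSpace X]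
    (δ : ℝ) (hδ : 0 < δ) (x₀ : X) (F : Set X)
    (hFne : F.Nonempty) (hFcpt : IsCompact F) (hFconn : IsConnected F)
    (hFdiam : δ ≤ Metric.diam F) :
    ∃ C : Set X, C ⊆ F \ Metric.ball x₀ (δ / 4) ∧ C.Nonempty ∧
      IsCompact C ∧ IsConnected C ∧ δ / 4 ≤ Metric.diam C := by
  obtain ⟨C, hCF, hCcpt, hCconn, hCdiam⟩ := exists_subcontinuum_outside_ball_general
    hFcpt hFconn x₀ (r := δ / 4) (by linarith) (by linarith)
  exact ⟨C, hCF, hCconn.nonempty, hCcpt, hCconn, by linarith⟩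
end
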